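/- The second moment of the stable-1/2 bridge at time t is ∫₀^z u² f_{tT}(u;z) du = (t/T) z² { 1 − c(T−t) e^{c²T²/(2z)} √(2π/z) Φ(−cT z^{−1/2}) }, for 0<t<T, z>0. -/

import Mathlib

open MeasureTheory Real Set

noncomputable def stdNormalCDF (x : ℝ) : ℝ :=
  ∫ u in Set.Iic x, (Real.sqrt (2 * Real.pi))⁻¹ * Real.exp (-(u ^ 2) / 2)

noncomputable def bridgeDensity (c t T y z : ℝ) : ℝ :=
  if 0 < y ∧ y ≤ z then
    (1 / Real.sqrt (2 * Real.pi)) * (c * t * (T - t) / T) *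
      Real.exp (-(c ^ 2 / 2) * (T * y - t * z) ^ 2 / (y * z * (z - y))) /
        (y - y ^ 2 / z) ^ ((3 : ℝ) / 2)
  else 0

lemma gI : Integrable (fun y : ℝ => exp (-y^2/2)) := by
  have := integrable_exp_neg_mul_sq (b := 1/2) (by norm_num)
  refine this.congr (ae_of_all _ fun y => ?_)
  simp only []; congr 1; ring

lemma gV : ∫ y : ℝ, exp (-y^2/2) = √(2*π) := by
  have := integral_gaussian (1/2)
  rw [show (2*π) = π/(1/2) by ring, ← this]
  congr 1; ext y; congr 1; ring

lemma h_img {a b : ℝ} (ha : 0 < a) (hb : 0 < b) :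
    (fun x : ℝ => a * x - b / x) '' Ioi 0 = univ := by
  ext y
  simp only [mem_image, mem_Ioi, mem_univ, iff_true]
  have h1 : |y| < √(y^2 + 4*a*b) := by
    rw [← sqrt_sq_eq_abs]; apply sqrt_lt_sqrt (by positivity); nlinarith [mul_pos ha hb]
  have h0 : 0 < y + √(y^2 + 4*a*b) := by linarith [neg_abs_le y]
  have h2 : √(y^2 + 4*a*b)^2 = y^2 + 4*a*b := sq_sqrt (by positivity)
  set w := √(y^2 + 4*a*b)
  refine ⟨(y + w) / (2*a), by positivity, ?_⟩
  field_simp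
  nlinarith

lemma h_inj {a b : ℝ} (ha : 0 < a) (hb : 0 < b) :
    InjOn (fun x : ℝ => a * x - b / x) (Ioi 0) := by
  apply StrictMonoOn.injOn
  intro x hx y hy hxy
  simp only [mem_Ioi] at hx hy
  have : b / y < b / x := div_lt_div_of_pos_left hb hx hxy
  have : a * x < a * y := by gcongr
  simp only []; linarith

lemma h_der {a b : ℝ} (x : ℝ) (hx : x ∈ Ioi (0:ℝ)) :
    HasDerivWithinAt (fun x : ℝ => a * x - b / x) (a + b / x^2) (Ioi 0) x := by
  have hx' : x ≠ 0 := ne_of_gt hx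
  have := ((hasDerivAt_id' x).const_mul a).sub ((hasDerivAt_const x b).fun_div (hasDerivAt_id' x) hx')
  exact (this.congr_deriv (by field_simp; ring)).hasDerivWithinAt

lemma csI {a b : ℝ} (ha : 0 < a) (hb : 0 < b) :
    IntegrableOn (fun x : ℝ => (a + b / x^2) * exp (-(a * x - b / x)^2/2)) (Ioi 0) := by
  have := (integrableOn_image_iff_integrableOn_abs_deriv_smul measurableSet_Ioi
    (h_der (a := a) (b := b)) (h_inj ha hb) (fun y => exp (-y^2/2))).1 (gI.integrableOn)
  refine this.congr_fun (fun x hx => ?_) measurableSet_Ioi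
  simp only [smul_eq_mul]
  rw [abs_of_nonneg (by positivity)]

lemma csV {a b : ℝ} (ha : 0 < a) (hb : 0 < b) :
    ∫ x in Ioi (0:ℝ), (a + b / x^2) * exp (-(a * x - b / x)^2/2) = √(2*π) := by
  have := (integral_image_eq_integral_abs_deriv_smul measurableSet_Ioi
    (h_der (a := a) (b := b)) (h_inj ha hb) (fun y => exp (-y^2/2)))
  rw [h_img ha hb, setIntegral_univ, gV] at this
  rw [this]
  refine setIntegral_congr_fun measurableSet_Ioi (fun x hx => ?_)
  simp only [smul_eq_mul]
  rw [abs_of_nonneg (by positivity)]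

lemma AI {a b : ℝ} (ha : 0 < a) (hb : 0 < b) :
    IntegrableOn (fun x : ℝ => a * exp (-(a * x - b / x)^2/2)) (Ioi 0) := by
  refine (csI ha hb).mono' (by fun_prop) ?_
  refine ae_of_all _ fun x => ?_
  rw [norm_of_nonneg (by positivity)]
  gcongr
  linarith [show 0 ≤ b / x^2 by positivity]

lemma BI {a b : ℝ} (ha : 0 < a) (hb : 0 < b) :
    IntegrableOn (fun x : ℝ => b / x^2 * exp (-(a * x - b / x)^2/2)) (Ioi 0) := by
  refine (csI ha hb).mono' (by fun_prop) ?_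
  refine ae_of_all _ fun x => ?_
  rw [norm_of_nonneg (by positivity)]
  gcongr
  linarith

lemma ABeq {a b : ℝ} (ha : 0 < a) (hb : 0 < b) :
    ∫ x in Ioi (0:ℝ), a * exp (-(a * x - b / x)^2/2)
     = ∫ x in Ioi (0:ℝ), b / x^2 * exp (-(a * x - b / x)^2/2) := by
  have him : (fun x : ℝ => b / (a * x)) '' Ioi 0 = Ioi 0 := by
    ext y
    simp only [mem_image, mem_Ioi]
    constructor
    · rintro ⟨x, hx, rfl⟩; positivity
    · intro hy
      exact ⟨b / (a*y), by positivity, by field_simp⟩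
  have hinj : InjOn (fun x : ℝ => b / (a * x)) (Ioi 0) := by
    intro x hx y hy hxy
    simp only [mem_Ioi] at hx hy hxy
    field_simp at hxy
    linarith
  have hder : ∀ x ∈ Ioi (0:ℝ), HasDerivWithinAt (fun x : ℝ => b / (a * x)) (- (b / (a * x^2))) (Ioi 0) x := by
    intro x hx
    have hx' : x ≠ 0 := ne_of_gt hx
    have := (hasDerivAt_const x b).fun_div ((hasDerivAt_id' x).const_mul a) (mul_ne_zero ha.ne' hx')
    exact (this.congr_deriv (by field_simp; ring)).hasDerivWithinAt
  have := (integral_image_eq_integral_abs_deriv_smul measurableSet_Ioi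
    hder hinj (fun x => a * exp (-(a * x - b / x)^2/2)))
  rw [him] at this
  rw [this]
  refine setIntegral_congr_fun measurableSet_Ioi (fun x hx => ?_)
  have hx' : 0 < x := hx
  simp only [smul_eq_mul]
  rw [abs_neg, abs_of_nonneg (by positivity)]
  rw [show a * (b / (a * x)) - b / (b / (a * x)) = - (a * x - b / x) by field_simp; ring, neg_sq]
  field_simp

lemma AV {a b : ℝ} (ha : 0 < a) (hb : 0 < b) :
    ∫ x in Ioi (0:ℝ), a * exp (-(a * x - b / x)^2/2) = √(2*π)/2 := by
  have h := csV ha hb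
  simp only [add_mul] at h
  rw [integral_add (AI ha hb) (BI ha hb), ← ABeq ha hb] at h
  linarith

lemma BV {a b : ℝ} (ha : 0 < a) (hb : 0 < b) :
    ∫ x in Ioi (0:ℝ), b / x^2 * exp (-(a * x - b / x)^2/2) = √(2*π)/2 := by
  rw [← ABeq ha hb, AV ha hb]

lemma inner_r {x A : ℝ} (hA : 0 < A) :
    ∫ r in Ioi (1:ℝ), r * A * exp (-(r^2 * ((1+x^2) * A))/2) = exp (-((1+x^2)*A)/2) / (1+x^2) := by
  have hp : 0 < (1+x^2) * A := by positivity
  have key := integral_Ioi_of_hasDerivAt_of_nonneg' (a := 1) (l := 0)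
    (g := fun r => - (exp (-(r^2 * ((1+x^2) * A))/2) / (1+x^2)))
    (g' := fun r => r * A * exp (-(r^2 * ((1+x^2) * A))/2)) ?_ ?_ ?_
  · rw [key]; simp
  · intro r _
    have h1 : HasDerivAt (fun r : ℝ => -(r^2 * ((1+x^2) * A))/2) (-(2 * r * ((1+x^2)*A))/2) r := by
      have := (((hasDerivAt_pow 2 r).mul_const ((1+x^2)*A)).fun_neg).div_const 2
      exact this.congr_deriv (by simp)
    have h2 := ((h1.exp).div_const (1+x^2)).fun_neg
    exact h2.congr_deriv (by field_simp)
  · intro r hr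
    have : (0:ℝ) < r := lt_trans one_pos hr
    positivity
  · rw [show (0:ℝ) = -(0 / (1+x^2)) by simp]
    refine (Filter.Tendsto.div_const ?_ _).neg
    refine tendsto_exp_atBot.comp ?_
    have h : Filter.Tendsto (fun r : ℝ => r^2 * ((1+x^2) * A / 2)) Filter.atTop Filter.atTop :=
      (Filter.tendsto_pow_atTop (by norm_num)).atTop_mul_const (by positivity)
    have := Filter.tendsto_neg_atTop_atBot.comp h
    refine this.congr fun r => ?_
    simp only [Function.comp]; ring

lemma inner_eq {a b r x : ℝ} (hr : 0 < r) (hx : 0 < x) :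
    r * (a^2 + b^2/x^2) * exp (-(r^2 * ((1+x^2) * (a^2 + b^2/x^2)))/2)
    = exp (-(r^2 * (a+b)^2)/2) * (a * ((r*a) * exp (-((r*a) * x - (r*b) / x)^2/2))
      + b * ((r*b) / x^2 * exp (-((r*a) * x - (r*b) / x)^2/2))) := by
  have : exp (-(r^2 * ((1+x^2) * (a^2 + b^2/x^2)))/2)
     = exp (-(r^2 * (a+b)^2)/2) * exp (-((r*a) * x - (r*b) / x)^2/2) := by
    rw [← exp_add]; congr 1; field_simp; ring
  rw [this]; ring

lemma inner_xI {a b r : ℝ} (ha : 0 < a) (hb : 0 < b) (hr : 0 < r) :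
    IntegrableOn (fun x => r * (a^2 + b^2/x^2) * exp (-(r^2 * ((1+x^2) * (a^2 + b^2/x^2)))/2)) (Ioi 0) := by
  have h := (((AI (mul_pos hr ha) (mul_pos hr hb)).const_mul a).add
    ((BI (mul_pos hr ha) (mul_pos hr hb)).const_mul b)).const_mul (exp (-(r^2 * (a+b)^2)/2))
  exact IntegrableOn.congr_fun h (fun x hx => (inner_eq hr hx).symm) measurableSet_Ioi

lemma inner_xV {a b r : ℝ} (ha : 0 < a) (hb : 0 < b) (hr : 0 < r) :
    ∫ x in Ioi (0:ℝ), r * (a^2 + b^2/x^2) * exp (-(r^2 * ((1+x^2) * (a^2 + b^2/x^2)))/2)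
     = √(2*π)/2 * ((a+b) * exp (-((a+b) * r)^2/2)) := by
  rw [setIntegral_congr_fun measurableSet_Ioi (fun x hx => inner_eq hr hx),
    integral_const_mul, integral_add ((AI (mul_pos hr ha) (mul_pos hr hb)).const_mul a)
      ((BI (mul_pos hr ha) (mul_pos hr hb)).const_mul b), integral_const_mul,
    AV (mul_pos hr ha) (mul_pos hr hb), integral_const_mul, BV (mul_pos hr ha) (mul_pos hr hb),
    show r^2 * (a+b)^2 = ((a+b)*r)^2 by ring]
  ring

lemma L2_aux {a b : ℝ} (ha : 0 < a) (hb : 0 < b) :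
    ∫ x in Ioi (0:ℝ), exp (-((1+x^2)*(a^2 + b^2/x^2))/2) / (1+x^2)
      = √(2*π)/2 * ∫ v in Ioi (a+b), exp (-v^2/2) := by
  have hs : 0 < a + b := by positivity
  have hV : ∀ r ∈ Ioi (1:ℝ), ∫ x in Ioi (0:ℝ), r * (a^2 + b^2/x^2) * exp (-(r^2 * ((1+x^2) * (a^2 + b^2/x^2)))/2)
     = √(2*π)/2 * ((a+b) * exp (-((a+b) * r)^2/2)) :=
    fun r hr => inner_xV ha hb (lt_trans one_pos hr)
  have hsw := integral_integral_swap (μ := volume.restrict (Ioi (0:ℝ))) (ν := volume.restrict (Ioi (1:ℝ)))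
    (f := fun x r => r * (a^2 + b^2/x^2) * exp (-(r^2 * ((1+x^2) * (a^2 + b^2/x^2)))/2)) ?_
  · rw [setIntegral_congr_fun measurableSet_Ioi hV, integral_const_mul, integral_const_mul,
      integral_comp_mul_left_Ioi (fun v => exp (-v^2/2)) 1 hs, smul_eq_mul, mul_one,
      mul_inv_cancel_left₀ hs.ne'] at hsw
    rw [← hsw]
    refine setIntegral_congr_fun measurableSet_Ioi fun x hx => ?_
    exact (inner_r (by positivity)).symm
  · rw [integrable_prod_iff' (by simp only [Function.uncurry_def]; exact Measurable.aestronglyMeasurable (by fun_prop))]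
    constructor
    · refine (ae_restrict_iff' measurableSet_Ioi).2 (ae_of_all _ fun r hr => ?_)
      exact inner_xI ha hb (lt_trans one_pos hr)
    · have h : IntegrableOn (fun r => √(2*π)/2 * ((a+b) * exp (-((a+b) * r)^2/2))) (Ioi 1) :=
        (((gI.comp_mul_left' hs.ne').const_mul _).const_mul _).integrableOn
      refine IntegrableOn.congr_fun h (fun r hr => ?_) measurableSet_Ioi
      have hr' : (0:ℝ) < r := lt_trans one_pos hr
      rw [← hV r hr]
      refine setIntegral_congr_fun measurableSet_Ioi fun x hx => ?_
      simp only [Function.uncurry]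
      rw [norm_of_nonneg (by positivity)]

lemma cdf_eq (s : ℝ) : stdNormalCDF (-s) = (√(2*π))⁻¹ * ∫ v in Ioi s, exp (-v^2/2) := by
  unfold stdNormalCDF
  rw [integral_const_mul]
  have := integral_comp_neg_Iic (-s) (fun v => exp (-v^2/2))
  rw [neg_neg] at this
  rw [← this]
  simp only [neg_sq]

lemma expsplit {a b x : ℝ} (hx : 0 < x) : exp (-(a * x - b / x)^2/2) / (1+x^2)
    = exp ((a+b)^2/2) * (exp (-((1+x^2)*(a^2 + b^2/x^2))/2) / (1+x^2)) := by
  rw [← mul_div_assoc, ← exp_add]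
  congr 2; field_simp; ring

lemma L2V {a b : ℝ} (ha : 0 < a) (hb : 0 < b) :
    ∫ x in Ioi (0:ℝ), exp (-(a * x - b / x)^2/2) / (1+x^2)
      = π * exp ((a+b)^2/2) * stdNormalCDF (-(a+b)) := by
  rw [setIntegral_congr_fun measurableSet_Ioi (fun x hx => expsplit hx), integral_const_mul,
    L2_aux ha hb, cdf_eq]
  have h : √(2*π)^2 = 2*π := sq_sqrt (by positivity)
  have h0 : √(2*π) ≠ 0 := by positivity
  field_simp
  rw [h]

lemma L2I {a b : ℝ} (ha : 0 < a) (hb : 0 < b) :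
    IntegrableOn (fun x : ℝ => exp (-(a * x - b / x)^2/2) / (1+x^2)) (Ioi 0) := by
  refine ((AI ha hb).const_mul a⁻¹).mono' (Measurable.aestronglyMeasurable (by fun_prop)) ?_
  refine ae_of_all _ fun x => ?_
  rw [norm_of_nonneg (by positivity), inv_mul_cancel_left₀ ha.ne']
  exact div_le_self (by positivity) (by nlinarith [sq_nonneg x])

lemma u_img {z : ℝ} (hz : 0 < z) : (fun x : ℝ => z / (1+x^2)) '' Ioi 0 = Ioo 0 z := by
  ext y
  simp only [mem_image, mem_Ioi, mem_Ioo]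
  constructor
  · rintro ⟨x, hx, rfl⟩
    exact ⟨by positivity, div_lt_self hz (by nlinarith [sq_pos_of_pos hx])⟩
  · rintro ⟨h0, h1⟩
    have h2 : 0 < (z - y)/y := div_pos (by linarith) h0
    refine ⟨√((z-y)/y), sqrt_pos.2 h2, ?_⟩
    rw [sq_sqrt h2.le]
    field_simp; ring

lemma u_inj {z : ℝ} (hz : 0 < z) : InjOn (fun x : ℝ => z / (1+x^2)) (Ioi 0) := by
  intro x hx y hy hxy
  simp only [mem_Ioi] at hx hy hxy
  have h1 : (1+x^2) = 1+y^2 := by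
    field_simp at hxy; linarith
  exact (pow_left_inj₀ hx.le hy.le (two_ne_zero)).1 (by linarith)

lemma u_der {z : ℝ} (x : ℝ) (_ : x ∈ Ioi (0:ℝ)) :
    HasDerivWithinAt (fun x : ℝ => z / (1+x^2)) (-(2*z*x/(1+x^2)^2)) (Ioi 0) x := by
  have := (hasDerivAt_const x z).fun_div ((hasDerivAt_pow 2 x).const_add 1) (by positivity)
  exact (this.congr_deriv (by simp; field_simp)).hasDerivWithinAt

lemma integrand_eq {c t T w x : ℝ} (hw : 0 < w) (hx : 0 < x) :
    |(-(2*w^2*x/(1+x^2)^2))| • ((w^2/(1+x^2))^2 * bridgeDensity c t T (w^2/(1+x^2)) (w^2))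
    = (2 * w^3 * ((1 / √(2*π)) * (c * t * (T - t) / T))) *
      (exp (-((c*t/w) * x - (c*(T-t)/w) / x)^2/2) / x^2
        - exp (-((c*t/w) * x - (c*(T-t)/w) / x)^2/2) / (1+x^2)) := by
  have h1 : w^2/(1+x^2) ≤ w^2 := div_le_self (by positivity) (by nlinarith [sq_nonneg x])
  unfold bridgeDensity
  rw [if_pos ⟨by positivity, h1⟩, abs_neg, abs_of_nonneg (by positivity), smul_eq_mul]
  have h2 : (w^2/(1+x^2) - (w^2/(1+x^2))^2/w^2) = (w*x/(1+x^2))^2 := by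
    field_simp; ring
  have h3 : (w^2/(1+x^2) - (w^2/(1+x^2))^2/w^2) ^ ((3:ℝ)/2) = (w*x/(1+x^2))^3 := by
    rw [h2, ← rpow_natCast, ← rpow_natCast, ← rpow_mul (by positivity)]; norm_num
  have h4 : -(c ^ 2 / 2) * (T * (w^2/(1+x^2)) - t * w^2) ^ 2 / ((w^2/(1+x^2)) * w^2 * (w^2 - (w^2/(1+x^2))))
     = -((c*t/w) * x - (c*(T-t)/w) / x)^2/2 := by
    rw [show w^2 - (w^2/(1+x^2)) = w^2 * x^2/(1+x^2) by field_simp; ring]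
    field_simp; ring
  rw [h3, h4]
  generalize exp (-((c*t/w) * x - (c*(T-t)/w) / x)^2/2) = E
  have : √(2*π) ≠ 0 := by positivity
  generalize 1 / √(2*π) * (c*t*(T-t)/T) = K
  field_simp; ring

theorem bridge_second_moment (c t T z : ℝ) (hc : 0 < c) (ht : 0 < t) (htT : t < T)
    (hz : 0 < z) :
    (∫ u in Set.Ioo (0 : ℝ) z, u ^ 2 * bridgeDensity c t T u z) =
      t / T * z ^ 2 *
        (1 - c * (T - t) * Real.exp (c ^ 2 * T ^ 2 / (2 * z)) *
          Real.sqrt (2 * Real.pi / z) * stdNormalCDF (-(c * T * z ^ (-(1 : ℝ) / 2)))) := by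
  obtain ⟨w, hw, rfl⟩ : ∃ w : ℝ, 0 < w ∧ z = w^2 := ⟨√z, sqrt_pos.2 hz, (sq_sqrt hz.le).symm⟩
  have hT : 0 < T := ht.trans htT
  have hTt : 0 < T - t := sub_pos.2 htT
  have ha : 0 < c*t/w := by positivity
  have hb : 0 < c*(T-t)/w := by positivity
  rw [← u_img hz, integral_image_eq_integral_abs_deriv_smul measurableSet_Ioi u_der (u_inj hz),
    setIntegral_congr_fun measurableSet_Ioi (fun x hx => integrand_eq hw hx), integral_const_mul]
  have e : ∀ x : ℝ, exp (-((c*t/w) * x - (c*(T-t)/w) / x)^2/2) / x^2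
    = (c*(T-t)/w)⁻¹ * ((c*(T-t)/w) / x^2 * exp (-((c*t/w) * x - (c*(T-t)/w) / x)^2/2)) := by
    intro x; field_simp
  simp only [e]
  rw [integral_sub ((BI ha hb).const_mul _) (L2I ha hb), integral_const_mul, BV ha hb, L2V ha hb]
  have hs : c*t/w + c*(T-t)/w = c * T / w := by field_simp; ring
  have hr : (w^2) ^ (-(1:ℝ)/2) = w⁻¹ := by
    rw [← rpow_natCast, ← rpow_mul hw.le, ← rpow_neg_one]; norm_num
  have hq : √(2*π/w^2) = √(2*π)/w := by
    rw [sqrt_div (by positivity), sqrt_sq hw.le]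
  rw [hs, hr, hq, ← div_eq_mul_inv, show c^2*T^2/(2*w^2) = (c*T/w)^2/2 by field_simp]
  generalize exp ((c*T/w)^2/2) = E
  generalize stdNormalCDF (-(c*T/w)) = P
  have h : √(2*π)^2 = 2*π := sq_sqrt (by positivity)
  have h0 : √(2*π) ≠ 0 := by positivity
  have hpi : π = √(2*π)^2/2 := by linarith
  generalize √(2*π) = Q at *
  rw [hpi]
  field_simp
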